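/- Let DES = (R, S, Σ_st, F, F_int) be a fully-typed data exchange setting, and assume that for every contentious pair of stds σ_1, σ_2 in Σ_st the object terms o_1 and o_2 are either both variables or both functional terms over the same function symbol. Then DES is consistent if and only if DES is key-covered. -/

import Mathlib

namespace RdfDE

/-- The RDF domain: a countably infinite domain partitioned into IRIs, literals and
blank nodes, with a distinguished infinite subset of null literals. -/
structure RDFDom (Dom : Type) where
  Iri : Set Dom
  Lit : Set Dom
  Blank : Set Dom
  NullLit : Set Dom
  cover : Iri ∪ Lit ∪ Blank = Set.univ
  disjIL : Disjoint Iri Lit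
  disjIB : Disjoint Iri Blank
  disjLB : Disjoint Lit Blank
  nullSub : NullLit ⊆ Lit
  infIri : Iri.Infinite
  infLit : Lit.Infinite
  infBlank : Blank.Infinite
  infNull : NullLit.Infinite

/-- Multiplicities 1, ?, *, +. -/
inductive Mult : Type
  | one | opt | star | plus

/-- A triple constraint `p :: T'^μ`; `target = none` stands for `Lit`. -/
structure TC (Dom Shape : Type) where
  prop : Dom
  target : Option Shape
  mult : Mult

/-- A ShEx schema over the (finite) type `Shape` of shape names. -/
structure ShEx (Dom Shape : Type) (D : RDFDom Dom) where
  δ : Shape → Set (TC Dom Shape)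
  finite : ∀ T, (δ T).Finite
  propIri : ∀ T : Shape, ∀ tc ∈ δ T, tc.prop ∈ D.Iri
  uniqueProp : ∀ T : Shape, ∀ tc1 ∈ δ T, ∀ tc2 ∈ δ T, tc1.prop = tc2.prop → tc1 = tc2

/-- Facts of the target signature `G_T`: a ternary `Triple`, unary `Lit`,
and a unary relation for each shape name. -/
inductive Fact (Dom Shape : Type) : Type
  | triple (s p o : Dom)
  | lit (n : Dom)
  | shape (T : Shape) (n : Dom)

/-- The unary fact `T(n)` where `T ∈ 𝒯 ∪ {Lit}`. -/
def factOf {Dom Shape : Type} (t : Option Shape) (n : Dom) : Fact Dom Shape :=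
  match t with
  | none => .lit n
  | some T => .shape T n

/-- Cardinality constraint imposed by a multiplicity on the set of objects. -/
def multOk {Dom : Type} (μ : Mult) (K : Set Dom) : Prop :=
  match μ with
  | .one => ∃! y, y ∈ K
  | .opt => K.Subsingleton
  | .star => True
  | .plus => K.Nonempty

/-- `J` satisfies every sentence of `Σ_S`: the sort sentences, and for each
triple constraint the sentences `tc`, `mult≥1` (if μ ∈ {1,+}) and `mult≤1` (if μ ∈ {1,?}). -/
def satSigma {Dom Shape : Type} (D : RDFDom Dom) (S : ShEx Dom Shape D)
    (J : Set (Fact Dom Shape)) : Prop :=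
  (∀ (T : Shape) (n : Dom), Fact.shape T n ∈ J → n ∈ D.Iri ∪ D.Blank) ∧
  (∀ n : Dom, Fact.lit n ∈ J → n ∈ D.Lit) ∧
  (∀ T : Shape, ∀ tc ∈ S.δ T,
    (∀ x y : Dom, Fact.shape T x ∈ J → Fact.triple x tc.prop y ∈ J →
      factOf tc.target y ∈ J) ∧
    ((tc.mult = Mult.one ∨ tc.mult = Mult.plus) →
      ∀ x : Dom, Fact.shape T x ∈ J → ∃ y : Dom, Fact.triple x tc.prop y ∈ J) ∧
    ((tc.mult = Mult.one ∨ tc.mult = Mult.opt) →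
      ∀ x y z : Dom, Fact.shape T x ∈ J → Fact.triple x tc.prop y ∈ J →
        Fact.triple x tc.prop z ∈ J → y = z))

/-- Nodes of a graph: values occurring in subject or object position. -/
def nodes {Dom : Type} (G : Set (Dom × Dom × Dom)) : Set Dom :=
  {n | ∃ t ∈ G, t.1 = n ∨ t.2.2 = n}

/-- `G` is an RDF graph: triples lie in `(Iri ∪ Blank) × Iri × (Iri ∪ Blank ∪ Lit)`. -/
def isRDFGraph {Dom : Type} (D : RDFDom Dom) (G : Set (Dom × Dom × Dom)) : Prop :=
  ∀ t ∈ G, t.1 ∈ D.Iri ∪ D.Blank ∧ t.2.1 ∈ D.Iri ∧ t.2.2 ∈ D.Iri ∪ D.Blank ∪ D.Lit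

/-- rdf-to-inst(G, typing). -/
def rdfToInst {Dom Shape : Type} (G : Set (Dom × Dom × Dom))
    (typing : Dom → Set (Option Shape)) : Set (Fact Dom Shape) :=
  {F | (∃ t ∈ G, F = Fact.triple t.1 t.2.1 t.2.2) ∨
       (∃ n ∈ nodes G, ∃ T ∈ typing n, F = factOf T n)}

/-- The graph component of inst-to-rdf(I). -/
def instGraph {Dom Shape : Type} (I : Set (Fact Dom Shape)) : Set (Dom × Dom × Dom) :=
  {t | Fact.triple t.1 t.2.1 t.2.2 ∈ I}

/-- The typing component of inst-to-rdf(I) (empty off the nodes of the graph). -/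
def instTyping {Dom Shape : Type} (I : Set (Fact Dom Shape)) : Dom → Set (Option Shape) :=
  fun n => {T | n ∈ nodes (instGraph I) ∧ factOf T n ∈ I}

/-- `(G, typing)` is correctly typed w.r.t. the schema `S`. -/
def correctlyTyped {Dom Shape : Type} (D : RDFDom Dom) (S : ShEx Dom Shape D)
    (G : Set (Dom × Dom × Dom)) (typing : Dom → Set (Option Shape)) : Prop :=
  ∀ n ∈ nodes G,
    ((none : Option Shape) ∈ typing n → n ∈ D.Lit) ∧
    (∀ T : Shape, some T ∈ typing n →
      n ∈ D.Iri ∪ D.Blank ∧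
      ∀ tc ∈ S.δ T,
        (∀ m : Dom, (n, tc.prop, m) ∈ G → tc.target ∈ typing m) ∧
        multOk tc.mult {m : Dom | (n, tc.prop, m) ∈ G})

/-- A fact `R(t)` of a relational instance. -/
structure RelFact (Dom RSym : Type) (ar : RSym → ℕ) where
  sym : RSym
  args : Fin (ar sym) → Dom

/-- A functional dependency `R : X → Y`. -/
structure Fd (RSym : Type) (ar : RSym → ℕ) where
  sym : RSym
  X : Set (Fin (ar sym))
  Y : Set (Fin (ar sym))

/-- The fd `φ` holds in the relational instance `I`. -/
def fdHolds {Dom RSym : Type} {ar : RSym → ℕ} (I : Set (RelFact Dom RSym ar))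
    (φ : Fd RSym ar) : Prop :=
  ∀ t1 t2 : Fin (ar φ.sym) → Dom,
    (⟨φ.sym, t1⟩ : RelFact Dom RSym ar) ∈ I →
    (⟨φ.sym, t2⟩ : RelFact Dom RSym ar) ∈ I →
    (∀ i ∈ φ.X, t1 i = t2 i) → ∀ j ∈ φ.Y, t1 j = t2 j

/-- A valid instance of the relational schema: finite, over `Lit \ NullLit`,
satisfying all functional dependencies. -/
def validInst {Dom RSym : Type} {ar : RSym → ℕ} (D : RDFDom Dom)
    (fds : Set (Fd RSym ar)) (I : Set (RelFact Dom RSym ar)) : Prop :=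
  I.Finite ∧ (∀ F ∈ I, ∀ i, F.args i ∈ D.Lit \ D.NullLit) ∧ ∀ φ ∈ fds, fdHolds I φ

/-- A relational atom with variables in `V`. -/
structure Atom (RSym : Type) (ar : RSym → ℕ) (V : Type) where
  sym : RSym
  args : Fin (ar sym) → V

/-- The object term of an std: either a variable or a functional term `g(z)`. -/
inductive Obj (FSym : Type) (far : FSym → ℕ) (V : Type) : Type
  | var (v : V)
  | app (g : FSym) (z : Fin (far g) → V)

/-- A fully-typed source-to-target tgd
`∀x,y. φ(x,y) ⇒ Triple(f(x), p, o) ∧ T_s(f(x)) ∧ T_o(o)`, where `x` has length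
`far f`, `y` has length `ny`, and the body uses exactly the variables `x ∪ y`. -/
structure Std (Dom RSym FSym : Type) (ar : RSym → ℕ) (far : FSym → ℕ) where
  f : FSym
  ny : ℕ
  body : Set (Atom RSym ar (Fin (far f) ⊕ Fin ny))
  bodyFinite : body.Finite
  covers : ∀ v : Fin (far f) ⊕ Fin ny, ∃ a ∈ body, ∃ i, a.args i = v
  p : Dom
  obj : Obj FSym far (Fin (far f) ⊕ Fin ny)

/-- The variables `x ∪ y` of an std. -/
abbrev Std.Var {Dom RSym FSym : Type} {ar : RSym → ℕ} {far : FSym → ℕ}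
    (σ : Std Dom RSym FSym ar far) : Type :=
  Fin (far σ.f) ⊕ Fin σ.ny

/-- `ν^{F_int}(o)`. -/
def Obj.eval {Dom FSym : Type} {far : FSym → ℕ} {V : Type}
    (Fint : (f : FSym) → (Fin (far f) → Dom) → Dom) (ν : V → Dom) :
    Obj FSym far V → Dom
  | .var v => ν v
  | .app g z => Fint g (fun i => ν (z i))

/-- The type `T_o` of the object of an std: `Lit` (i.e. `none`) for a variable,
`type(g)` for a functional term `g(z)`. -/
def Std.objType {Dom RSym FSym Shape : Type} {ar : RSym → ℕ} {far : FSym → ℕ}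
    (ftype : FSym → Shape) (σ : Std Dom RSym FSym ar far) : Option Shape :=
  match σ.obj with
  | .var _ => none
  | .app g _ => some (ftype g)

/-- The valuation `ν` maps every atom of the body of `σ` to a fact of `I`. -/
def bodyHolds {Dom RSym FSym : Type} {ar : RSym → ℕ} {far : FSym → ℕ}
    (σ : Std Dom RSym FSym ar far) (ν : σ.Var → Dom)
    (I : Set (RelFact Dom RSym ar)) : Prop :=
  ∀ a ∈ σ.body, (⟨a.sym, fun i => ν (a.args i)⟩ : RelFact Dom RSym ar) ∈ I

/-- `I ∪ J ∪ F_int ⊨ σ`. -/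
def stdSat {Dom RSym FSym Shape : Type} {ar : RSym → ℕ} {far : FSym → ℕ}
    (Fint : (f : FSym) → (Fin (far f) → Dom) → Dom) (ftype : FSym → Shape)
    (σ : Std Dom RSym FSym ar far) (I : Set (RelFact Dom RSym ar))
    (J : Set (Fact Dom Shape)) : Prop :=
  ∀ ν : σ.Var → Dom, bodyHolds σ ν I →
    Fact.triple (Fint σ.f fun i => ν (Sum.inl i)) σ.p (Obj.eval Fint ν σ.obj) ∈ J ∧
    Fact.shape (ftype σ.f) (Fint σ.f fun i => ν (Sum.inl i)) ∈ J ∧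
    factOf (σ.objType ftype) (Obj.eval Fint ν σ.obj) ∈ J

/-- The std conforms to the schema `S`: if `δ(T_s)` contains a triple constraint
on the property `p` of the std then its target is `T_o`. -/
def Std.conforms {Dom RSym FSym Shape : Type} {ar : RSym → ℕ} {far : FSym → ℕ}
    (D : RDFDom Dom) (S : ShEx Dom Shape D) (ftype : FSym → Shape)
    (σ : Std Dom RSym FSym ar far) : Prop :=
  ∀ tc ∈ S.δ (ftype σ.f), tc.prop = σ.p → tc.target = σ.objType ftype

/-- A fully-typed data exchange setting `(R, S, Σ_st, F, F_int)`. -/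
structure DES (Dom RSym FSym Shape : Type) (ar : RSym → ℕ) (far : FSym → ℕ) where
  D : RDFDom Dom
  shex : ShEx Dom Shape D
  fds : Set (Fd RSym ar)
  fdsFin : fds.Finite
  ftype : FSym → Shape
  Fint : (f : FSym) → (Fin (far f) → Dom) → Dom
  FintIri : ∀ f args, Fint f args ∈ D.Iri
  FintInj : ∀ f, Function.Injective (Fint f)
  FintDisj : ∀ f g, f ≠ g → ∀ a b, Fint f a ≠ Fint g b
  stds : Set (Std Dom RSym FSym ar far)
  stdsFin : stds.Finite
  stP : ∀ σ ∈ stds, σ.p ∈ D.Iri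
  stConf : ∀ σ ∈ stds, σ.conforms D shex ftype

variable {Dom RSym FSym Shape : Type} {ar : RSym → ℕ} {far : FSym → ℕ}

/-- `σ1, σ2` are a contentious pair of stds of the setting. -/
def contentious (des : DES Dom RSym FSym Shape ar far)
    (σ1 σ2 : Std Dom RSym FSym ar far) : Prop :=
  σ1 ∈ des.stds ∧ σ2 ∈ des.stds ∧ σ1.f = σ2.f ∧ σ1.p = σ2.p ∧
  ∃ tc ∈ des.shex.δ (des.ftype σ1.f), tc.prop = σ1.p ∧
    tc.target = σ1.objType des.ftype ∧ (tc.mult = Mult.one ∨ tc.mult = Mult.opt)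

/-- `σ1, σ2` are functionally overlapping. -/
def funOverlap (des : DES Dom RSym FSym Shape ar far)
    (σ1 σ2 : Std Dom RSym FSym ar far) : Prop :=
  ∀ I : Set (RelFact Dom RSym ar), validInst des.D des.fds I →
    ∀ (ν1 : σ1.Var → Dom) (ν2 : σ2.Var → Dom),
      bodyHolds σ1 ν1 I → bodyHolds σ2 ν2 I →
      HEq (fun i : Fin (far σ1.f) => ν1 (Sum.inl i))
          (fun i : Fin (far σ2.f) => ν2 (Sum.inl i)) →
      Obj.eval des.Fint ν1 σ1.obj = Obj.eval des.Fint ν2 σ2.obj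

/-- The setting is key-covered. -/
def keyCovered (des : DES Dom RSym FSym Shape ar far) : Prop :=
  ∀ σ1 σ2, contentious des σ1 σ2 → funOverlap des σ1 σ2

/-- `J` is a solution for the valid source instance `I`. -/
def isSolution (des : DES Dom RSym FSym Shape ar far)
    (I : Set (RelFact Dom RSym ar)) (J : Set (Fact Dom Shape)) : Prop :=
  (∀ σ ∈ des.stds, stdSat des.Fint des.ftype σ I J) ∧ satSigma des.D des.shex J

/-- The setting is consistent: every valid source instance has a solution. -/
def consistent (des : DES Dom RSym FSym Shape ar far) : Prop :=
  ∀ I : Set (RelFact Dom RSym ar), validInst des.D des.fds I →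
    ∃ J : Set (Fact Dom Shape), isSolution des I J

/-- The canonical target instance `J_0` of `I`. -/
def canonical (des : DES Dom RSym FSym Shape ar far)
    (I : Set (RelFact Dom RSym ar)) : Set (Fact Dom Shape) :=
  {F | ∃ σ ∈ des.stds, ∃ ν : σ.Var → Dom, bodyHolds σ ν I ∧
    (F = Fact.triple (des.Fint σ.f fun i => ν (Sum.inl i)) σ.p (Obj.eval des.Fint ν σ.obj) ∨
     F = Fact.shape (des.ftype σ.f) (des.Fint σ.f fun i => ν (Sum.inl i)) ∨
     F = factOf (σ.objType des.ftype) (Obj.eval des.Fint ν σ.obj))}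

/-- The vector `z` of variables of the object term of an std (of length 1 if the
object is a variable). -/
def Std.objVars (σ : Std Dom RSym FSym ar far) : Σ n : ℕ, Fin n → σ.Var :=
  match σ.obj with
  | .var v => ⟨1, fun _ => v⟩
  | .app g z => ⟨far g, z⟩

/-- The view `V_σ(I)` as a set of pairs of tuples (encoded as lists):
the values of `x` and the values of `z`. -/
def viewRel (σ : Std Dom RSym FSym ar far) (I : Set (RelFact Dom RSym ar)) :
    Set (List Dom × List Dom) :=
  {ab | ∃ ν : σ.Var → Dom, bodyHolds σ ν I ∧
        ab.1 = List.ofFn (fun i : Fin (far σ.f) => ν (Sum.inl i)) ∧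
        ab.2 = List.ofFn (fun j => ν (σ.objVars.2 j))}

/-- The object terms of `σ1` and `σ2` are either both variables or both functional
terms over the same function symbol. -/
def objMatch (σ1 σ2 : Std Dom RSym FSym ar far) : Prop :=
  (∃ v1 v2, σ1.obj = Obj.var v1 ∧ σ2.obj = Obj.var v2) ∨
  (∃ g z1 z2, σ1.obj = Obj.app g z1 ∧ σ2.obj = Obj.app g z2)

/-- `(T, p)` is a pair for which a fresh value `b^{T,p}` is needed:
`δ(T)` has a constraint on `p` with multiplicity in `{1, +}`. -/
def relevantBP {Dom Shape : Type} {D : RDFDom Dom} (S : ShEx Dom Shape D)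
    (T : Shape) (p : Dom) : Prop :=
  ∃ tc ∈ S.δ T, tc.prop = p ∧ (tc.mult = Mult.one ∨ tc.mult = Mult.plus)

/-- `J_1 = { T'(b^{T,p}) | p :: T'^μ ∈ δ(T), μ ∈ {1,+} }`. -/
def J1set {Dom Shape : Type} {D : RDFDom Dom} (S : ShEx Dom Shape D)
    (b : Shape → Dom → Dom) : Set (Fact Dom Shape) :=
  {F | ∃ T : Shape, ∃ tc ∈ S.δ T, (tc.mult = Mult.one ∨ tc.mult = Mult.plus) ∧
       F = factOf tc.target (b T tc.prop)}

/-- `J_2 = { Triple(b^{T,p}, q, b^{T_1,q}) | T_1(b^{T,p}) ∈ J_1, q :: T_2^μ ∈ δ(T_1), μ ∈ {1,+} }`. -/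
def J2set {Dom Shape : Type} {D : RDFDom Dom} (S : ShEx Dom Shape D)
    (b : Shape → Dom → Dom) : Set (Fact Dom Shape) :=
  {F | ∃ (T1 : Shape) (n : Dom), Fact.shape T1 n ∈ J1set S b ∧
       ∃ tc2 ∈ S.δ T1, (tc2.mult = Mult.one ∨ tc2.mult = Mult.plus) ∧
       F = Fact.triple n tc2.prop (b T1 tc2.prop)}

/-- `J_3 = { Triple(a, p, b^{T,p}) | T(a) ∈ J, p :: T'^μ ∈ δ(T), μ ∈ {1,+},
no Triple(a, p, b') in J }`. -/
def J3set {Dom Shape : Type} {D : RDFDom Dom} (S : ShEx Dom Shape D)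
    (b : Shape → Dom → Dom) (J : Set (Fact Dom Shape)) : Set (Fact Dom Shape) :=
  {F | ∃ (T : Shape) (n : Dom), Fact.shape T n ∈ J ∧
       ∃ tc ∈ S.δ T, (tc.mult = Mult.one ∨ tc.mult = Mult.plus) ∧
       (¬ ∃ y : Dom, Fact.triple n tc.prop y ∈ J) ∧
       F = Fact.triple n tc.prop (b T tc.prop)}

/-- The value `d` occurs in the fact `F`. -/
def occursIn {Dom Shape : Type} (d : Dom) : Fact Dom Shape → Prop
  | .triple s p o => d = s ∨ d = p ∨ d = o
  | .lit n => d = n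
  | .shape _ n => d = n

variable {Dom RSym FSym Shape : Type} {ar : RSym → ℕ} {far : FSym → ℕ}

/-
If a solution exists, then applying two contentious stds to the same subject creates two objects
for a property with upper bound one, so the objects coincide. Conversely, key-coveredness says
that the canonical instance respects the upper multiplicity bounds. The lower bounds are then met
by adding, for every node lacking a required property, a single triple to a null. The nulls are
chosen according to the target of the constraint, so that every node still carries at most one
shape and an added triple is subject to one triple constraint only.
-/

section Facts

@[simp]
theorem factOf_eq_shape_iff {t : Option Shape} {T : Shape} {x y : Dom} :
    factOf t x = Fact.shape T y ↔ t = some T ∧ x = y := by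
  cases t <;> simp [factOf]

@[simp]
theorem factOf_eq_lit_iff {t : Option Shape} {x y : Dom} :
    factOf t x = Fact.lit y ↔ t = none ∧ x = y := by
  cases t <;> simp [factOf]

@[simp]
theorem factOf_ne_triple {t : Option Shape} {x s p o : Dom} :
    factOf t x ≠ Fact.triple s p o := by
  cases t <;> simp [factOf]

@[simp]
theorem occursIn_factOf_iff {t : Option Shape} {x y : Dom} :
    occursIn x (factOf t y) ↔ x = y := by
  cases t <;> rfl

end Facts

section Completion

variable {D : RDFDom Dom} {S : ShEx Dom Shape D} {J : Set (Fact Dom Shape)}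
  {b : Shape → Dom → Dom}

/-- A partial model of `Σ_S`: an instance satisfying every sentence of `Σ_S` except possibly the
lower multiplicity bounds, in which moreover each node has at most one shape. These are the
instances that `J3set` extends to models of `Σ_S`. -/
structure IsPartialModel (D : RDFDom Dom) (S : ShEx Dom Shape D) (J : Set (Fact Dom Shape)) :
    Prop where
  shape_sort : ∀ {T x}, Fact.shape T x ∈ J → x ∈ D.Iri ∪ D.Blank
  lit_sort : ∀ {x}, Fact.lit x ∈ J → x ∈ D.Lit
  shape_unique : ∀ {T T' x}, Fact.shape T x ∈ J → Fact.shape T' x ∈ J → T = T'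
  target_mem : ∀ {T tc x y}, tc ∈ S.δ T → Fact.shape T x ∈ J → Fact.triple x tc.prop y ∈ J →
    factOf tc.target y ∈ J
  object_unique : ∀ {T tc x y z}, tc ∈ S.δ T → tc.mult = Mult.one ∨ tc.mult = Mult.opt →
    Fact.shape T x ∈ J → Fact.triple x tc.prop y ∈ J → Fact.triple x tc.prop z ∈ J → y = z

/-- An admissible choice of the nulls `b^{T,p}`: blank nodes or literals as the target of the
constraint on `p` requires. The paper's nulls are pairwise distinct; here constraints with the
same target may share one. -/
structure IsNullChoice (D : RDFDom Dom) (S : ShEx Dom Shape D) (b : Shape → Dom → Dom) :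
    Prop where
  lit_mem : ∀ {T tc}, tc ∈ S.δ T → tc.target = none → b T tc.prop ∈ D.Lit
  blank_mem : ∀ {T tc T'}, tc ∈ S.δ T → tc.target = some T' → b T tc.prop ∈ D.Blank
  target_eq : ∀ {T₁ T₂ tc₁ tc₂}, tc₁ ∈ S.δ T₁ → tc₂ ∈ S.δ T₂ →
    b T₁ tc₁.prop = b T₂ tc₂.prop → tc₁.target = tc₂.target

theorem exists_isNullChoice [Countable Shape] (D : RDFDom Dom) (S : ShEx Dom Shape D) :
    ∃ b, IsNullChoice D S b := by
  obtain ⟨e, he⟩ := exists_injective_nat Shape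
  obtain ⟨l, hl⟩ := D.infLit.nonempty
  let blank : Shape → D.Blank := D.infBlank.natEmbedding ∘ e
  have blank_inj : Function.Injective blank := D.infBlank.natEmbedding.injective.comp he
  let null : Option Shape → Dom := fun t => t.elim l fun T => blank T
  have null_inj : Function.Injective null :=
    Option.injective_iff.2 ⟨Subtype.val_injective.comp blank_inj, by
      rintro ⟨T, hT⟩
      exact D.disjLB.ne_of_mem hl (blank T).2 hT.symm⟩
  have exists_null (T p) : ∃ x, ∀ tc ∈ S.δ T, tc.prop = p → x = null tc.target := by
    by_cases h : ∃ tc ∈ S.δ T, tc.prop = p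
    · obtain ⟨tc, htc, rfl⟩ := h
      exact ⟨null tc.target, fun tc' htc' hp => by rw [S.uniqueProp T tc htc tc' htc' hp.symm]⟩
    · exact ⟨l, fun tc htc hp => absurd ⟨tc, htc, hp⟩ h⟩
  choose b hb using exists_null
  refine ⟨b, fun {T tc} htc ht => ?_, fun {T tc T'} htc ht => ?_, fun h₁ h₂ h => ?_⟩
  · rwa [hb T _ tc htc rfl, ht]
  · rw [hb T _ tc htc rfl, ht]
    exact (blank T').2
  · rw [hb _ _ _ h₁ rfl, hb _ _ _ h₂ rfl] at h
    exact null_inj h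

theorem triple_notMem_J1set {s p o : Dom} : Fact.triple s p o ∉ J1set S b := by
  rintro ⟨T, tc, -, -, h⟩
  exact factOf_ne_triple h.symm

theorem IsNullChoice.mem_lit_of_mem_J1set (hb : IsNullChoice D S b) {x : Dom}
    (h : Fact.lit x ∈ J1set S b) : x ∈ D.Lit := by
  obtain ⟨T, tc, htc, -, h⟩ := h
  obtain ⟨ht, rfl⟩ := factOf_eq_lit_iff.1 h.symm
  exact hb.lit_mem htc ht

theorem IsNullChoice.mem_blank_of_mem_J1set (hb : IsNullChoice D S b) {T : Shape} {x : Dom}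
    (h : Fact.shape T x ∈ J1set S b) : x ∈ D.Blank := by
  obtain ⟨T', tc, htc, -, h⟩ := h
  obtain ⟨ht, rfl⟩ := factOf_eq_shape_iff.1 h.symm
  exact hb.blank_mem htc ht

theorem IsNullChoice.shape_unique_of_mem_J1set (hb : IsNullChoice D S b) {T T' : Shape} {x : Dom}
    (h : Fact.shape T x ∈ J1set S b) (h' : Fact.shape T' x ∈ J1set S b) : T = T' := by
  obtain ⟨U, tc, htc, -, h⟩ := h
  obtain ⟨U', tc', htc', -, h'⟩ := h'
  obtain ⟨ht, rfl⟩ := factOf_eq_shape_iff.1 h.symm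
  obtain ⟨ht', hx⟩ := factOf_eq_shape_iff.1 h'.symm
  exact Option.some_injective _ (ht ▸ ht' ▸ hb.target_eq htc htc' hx.symm)

theorem IsPartialModel.union_J1set (hJ : IsPartialModel D S J) (hb : IsNullChoice D S b)
    (hblank : ∀ F ∈ J, ∀ x ∈ D.Blank, ¬ occursIn x F) : IsPartialModel D S (J ∪ J1set S b) := by
  have triple_mem {s p o} (h : Fact.triple s p o ∈ J ∪ J1set S b) : Fact.triple s p o ∈ J :=
    h.resolve_right triple_notMem_J1set
  have shape_mem {T s p o} (hs : Fact.shape T s ∈ J ∪ J1set S b)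
      (ht : Fact.triple s p o ∈ J) : Fact.shape T s ∈ J :=
    hs.resolve_right fun h => hblank _ ht s (hb.mem_blank_of_mem_J1set h) (Or.inl rfl)
  refine ⟨fun h => ?_, fun h => ?_, fun h h' => ?_, fun htc hx hy => ?_,
    fun htc hm hx hy hz => ?_⟩
  · exact h.elim hJ.shape_sort fun h => Or.inr (hb.mem_blank_of_mem_J1set h)
  · exact h.elim hJ.lit_sort hb.mem_lit_of_mem_J1set
  · rcases h with h | h <;> rcases h' with h' | h'
    · exact hJ.shape_unique h h'
    · exact absurd rfl (hblank _ h _ (hb.mem_blank_of_mem_J1set h'))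
    · exact absurd rfl (hblank _ h' _ (hb.mem_blank_of_mem_J1set h))
    · exact hb.shape_unique_of_mem_J1set h h'
  · exact Or.inl (hJ.target_mem htc (shape_mem hx (triple_mem hy)) (triple_mem hy))
  · exact hJ.object_unique htc hm (shape_mem hx (triple_mem hy)) (triple_mem hy) (triple_mem hz)

theorem shape_mem_union_J3set_iff {T : Shape} {x : Dom} :
    Fact.shape T x ∈ J ∪ J3set S b J ↔ Fact.shape T x ∈ J := by
  simp [J3set]

theorem lit_mem_union_J3set_iff {x : Dom} :
    Fact.lit x ∈ J ∪ J3set S b J ↔ Fact.lit x ∈ J := by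
  simp [J3set]

theorem IsPartialModel.triple_mem_J3set_iff (hJ : IsPartialModel D S J) {T : Shape}
    {tc : TC Dom Shape} {x y : Dom} (htc : tc ∈ S.δ T) (hx : Fact.shape T x ∈ J) :
    Fact.triple x tc.prop y ∈ J3set S b J ↔
      (tc.mult = Mult.one ∨ tc.mult = Mult.plus) ∧ (¬ ∃ z, Fact.triple x tc.prop z ∈ J) ∧
        y = b T tc.prop := by
  refine ⟨?_, fun ⟨hm, hn, hy⟩ => ⟨T, x, hx, tc, htc, hm, hn, hy ▸ rfl⟩⟩
  rintro ⟨T', x', hx', tc', htc', hm, hn, h⟩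
  obtain ⟨rfl, hp, rfl⟩ := Fact.triple.inj h
  obtain rfl := hJ.shape_unique hx hx'
  obtain rfl := S.uniqueProp T tc htc tc' htc' hp
  exact ⟨hm, hn, rfl⟩

theorem IsPartialModel.satSigma_union_J3set (hJ : IsPartialModel D S J) (hb : J1set S b ⊆ J) :
    satSigma D S (J ∪ J3set S b J) := by
  simp only [satSigma, shape_mem_union_J3set_iff, lit_mem_union_J3set_iff]
  refine ⟨fun T x => hJ.shape_sort, fun x => hJ.lit_sort, fun T tc htc => ⟨?_, ?_, ?_⟩⟩
  · rintro x y hx (hy | hy)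
    · exact Or.inl (hJ.target_mem htc hx hy)
    · obtain ⟨hm, -, rfl⟩ := (hJ.triple_mem_J3set_iff htc hx).1 hy
      exact Or.inl (hb ⟨T, tc, htc, hm, rfl⟩)
  · intro hm x hx
    by_cases h : ∃ y, Fact.triple x tc.prop y ∈ J
    · exact h.imp fun _ => Or.inl
    · exact ⟨b T tc.prop, Or.inr ((hJ.triple_mem_J3set_iff htc hx).2 ⟨hm, h, rfl⟩)⟩
  · rintro hm x y z hx (hy | hy) (hz | hz)
    · exact hJ.object_unique htc hm hx hy hz
    · exact absurd ⟨y, hy⟩ ((hJ.triple_mem_J3set_iff htc hx).1 hz).2.1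
    · exact absurd ⟨z, hz⟩ ((hJ.triple_mem_J3set_iff htc hx).1 hy).2.1
    · rw [((hJ.triple_mem_J3set_iff htc hx).1 hy).2.2,
        ((hJ.triple_mem_J3set_iff htc hx).1 hz).2.2]

end Completion

section Canonical

variable {des : DES Dom RSym FSym Shape ar far} {I : Set (RelFact Dom RSym ar)}

theorem DES.Fint_eq_Fint_iff (des : DES Dom RSym FSym Shape ar far) {f g : FSym}
    {a : Fin (far f) → Dom} {b : Fin (far g) → Dom} :
    des.Fint f a = des.Fint g b ↔ f = g ∧ HEq a b := by
  by_cases hfg : f = g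
  · subst hfg
    simp [(des.FintInj f).eq_iff]
  · simp [hfg, des.FintDisj f g hfg a b]

theorem stdSat.mono {Fint : (f : FSym) → (Fin (far f) → Dom) → Dom} {ftype : FSym → Shape}
    {σ : Std Dom RSym FSym ar far} {J J' : Set (Fact Dom Shape)} (h : stdSat Fint ftype σ I J)
    (hJ : J ⊆ J') : stdSat Fint ftype σ I J' := fun ν hν =>
  ⟨hJ (h ν hν).1, hJ (h ν hν).2.1, hJ (h ν hν).2.2⟩

theorem stdSat_canonical {σ : Std Dom RSym FSym ar far} (hσ : σ ∈ des.stds) :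
    stdSat des.Fint des.ftype σ I (canonical des I) := fun ν hν =>
  ⟨⟨σ, hσ, ν, hν, Or.inl rfl⟩, ⟨σ, hσ, ν, hν, Or.inr (Or.inl rfl)⟩,
    ⟨σ, hσ, ν, hν, Or.inr (Or.inr rfl)⟩⟩

theorem Std.exists_eval_obj_eq_Fint_of_objType_eq_some {ftype : FSym → Shape}
    {Fint : (f : FSym) → (Fin (far f) → Dom) → Dom} {σ : Std Dom RSym FSym ar far} {T : Shape}
    (h : σ.objType ftype = some T) (ν : σ.Var → Dom) :
    ∃ g a, σ.obj.eval Fint ν = Fint g a ∧ T = ftype g := by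
  unfold Std.objType at h
  cases hobj : σ.obj with
  | var v => simp [hobj] at h
  | app g z => exact ⟨g, _, rfl, by simpa [hobj, eq_comm] using h⟩

theorem Std.eval_obj_mem_lit {ftype : FSym → Shape} {D : RDFDom Dom}
    {fds : Set (Fd RSym ar)} {Fint : (f : FSym) → (Fin (far f) → Dom) → Dom}
    {σ : Std Dom RSym FSym ar far} (h : σ.objType ftype = none) (hI : validInst D fds I)
    {ν : σ.Var → Dom} (hν : bodyHolds σ ν I) : σ.obj.eval Fint ν ∈ D.Lit := by
  unfold Std.objType at h
  cases hobj : σ.obj with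
  | var v =>
    obtain ⟨a, ha, i, rfl⟩ := σ.covers v
    exact (hI.2.1 _ (hν a ha) i).1
  | app g z => simp [hobj] at h

theorem triple_mem_canonical_iff {s p o : Dom} :
    Fact.triple s p o ∈ canonical des I ↔ ∃ σ ∈ des.stds, ∃ ν : σ.Var → Dom, bodyHolds σ ν I ∧
      s = des.Fint σ.f (fun i => ν (Sum.inl i)) ∧ p = σ.p ∧ o = σ.obj.eval des.Fint ν := by
  simp [canonical, factOf_ne_triple.symm]

theorem exists_Fint_of_shape_mem_canonical {T : Shape} {x : Dom}
    (h : Fact.shape T x ∈ canonical des I) : ∃ f a, x = des.Fint f a ∧ T = des.ftype f := by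
  obtain ⟨σ, -, ν, -, h | h | h⟩ := h
  · cases h
  · obtain ⟨rfl, rfl⟩ := Fact.shape.inj h
    exact ⟨_, _, rfl, rfl⟩
  · obtain ⟨ht, rfl⟩ := factOf_eq_shape_iff.1 h.symm
    exact Std.exists_eval_obj_eq_Fint_of_objType_eq_some ht ν

theorem shape_unique_of_mem_canonical {T T' : Shape} {x : Dom}
    (h : Fact.shape T x ∈ canonical des I) (h' : Fact.shape T' x ∈ canonical des I) :
    T = T' := by
  obtain ⟨f, a, rfl, rfl⟩ := exists_Fint_of_shape_mem_canonical h
  obtain ⟨g, a', hfg, rfl⟩ := exists_Fint_of_shape_mem_canonical h'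
  rw [(des.Fint_eq_Fint_iff.1 hfg).1]

theorem mem_lit_of_mem_canonical (hI : validInst des.D des.fds I) {x : Dom}
    (h : Fact.lit x ∈ canonical des I) : x ∈ des.D.Lit := by
  obtain ⟨σ, -, ν, hν, h | h | h⟩ := h
  · cases h
  · cases h
  · obtain ⟨ht, rfl⟩ := factOf_eq_lit_iff.1 h.symm
    exact Std.eval_obj_mem_lit ht hI hν

theorem Std.eval_obj_notMem_blank {σ : Std Dom RSym FSym ar far} (hI : validInst des.D des.fds I)
    {ν : σ.Var → Dom} (hν : bodyHolds σ ν I) : σ.obj.eval des.Fint ν ∉ des.D.Blank := by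
  cases ht : σ.objType des.ftype with
  | none =>
    exact des.D.disjLB.notMem_of_mem_left (Std.eval_obj_mem_lit ht hI hν)
  | some T =>
    obtain ⟨g, a, h, -⟩ := Std.exists_eval_obj_eq_Fint_of_objType_eq_some (Fint := des.Fint) ht ν
    exact h ▸ des.D.disjIB.notMem_of_mem_left (des.FintIri g a)

theorem not_occursIn_of_mem_canonical (hI : validInst des.D des.fds I) {F : Fact Dom Shape}
    (hF : F ∈ canonical des I) {x : Dom} (hx : x ∈ des.D.Blank) : ¬ occursIn x F := by
  obtain ⟨σ, hσ, ν, hν, h⟩ := hF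
  have ne_subject : x ≠ des.Fint σ.f fun i => ν (Sum.inl i) :=
    (des.D.disjIB.ne_of_mem (des.FintIri _ _) hx).symm
  have ne_property : x ≠ σ.p := (des.D.disjIB.ne_of_mem (des.stP σ hσ) hx).symm
  have ne_object : x ≠ σ.obj.eval des.Fint ν :=
    ne_of_mem_of_not_mem hx (Std.eval_obj_notMem_blank hI hν)
  rcases h with rfl | rfl | rfl
  · simp [occursIn, ne_subject, ne_property, ne_object]
  · exact ne_subject
  · simpa using ne_object

theorem target_mem_canonical {T : Shape} {tc : TC Dom Shape} {x y : Dom}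
    (htc : tc ∈ des.shex.δ T) (hx : Fact.shape T x ∈ canonical des I)
    (hy : Fact.triple x tc.prop y ∈ canonical des I) :
    factOf tc.target y ∈ canonical des I := by
  obtain ⟨σ, hσ, ν, hν, rfl, hp, rfl⟩ := triple_mem_canonical_iff.1 hy
  obtain ⟨-, hsubject, hobject⟩ := stdSat_canonical hσ ν hν
  obtain rfl := shape_unique_of_mem_canonical hx hsubject
  rwa [des.stConf σ hσ tc htc hp]

theorem keyCovered.object_unique_of_mem_canonical (hk : keyCovered des)
    (hI : validInst des.D des.fds I) {T : Shape} {tc : TC Dom Shape} {x y z : Dom}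
    (htc : tc ∈ des.shex.δ T) (hm : tc.mult = Mult.one ∨ tc.mult = Mult.opt)
    (hx : Fact.shape T x ∈ canonical des I) (hy : Fact.triple x tc.prop y ∈ canonical des I)
    (hz : Fact.triple x tc.prop z ∈ canonical des I) : y = z := by
  obtain ⟨σ, hσ, ν, hν, rfl, hp, rfl⟩ := triple_mem_canonical_iff.1 hy
  obtain ⟨σ', hσ', ν', hν', hsubject, hp', rfl⟩ := triple_mem_canonical_iff.1 hz
  obtain rfl := shape_unique_of_mem_canonical hx (stdSat_canonical hσ ν hν).2.1
  obtain ⟨hf, hargs⟩ := des.Fint_eq_Fint_iff.1 hsubject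
  have hcontentious : contentious des σ σ' :=
    ⟨hσ, hσ', hf, hp.symm.trans hp', tc, htc, hp, des.stConf σ hσ tc htc hp, hm⟩
  exact hk σ σ' hcontentious I hI ν ν' hν hν' hargs

theorem keyCovered.isPartialModel_canonical (hk : keyCovered des)
    (hI : validInst des.D des.fds I) : IsPartialModel des.D des.shex (canonical des I) where
  shape_sort h := by
    obtain ⟨f, a, rfl, -⟩ := exists_Fint_of_shape_mem_canonical h
    exact Or.inl (des.FintIri f a)
  lit_sort := mem_lit_of_mem_canonical hI
  shape_unique := shape_unique_of_mem_canonical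
  target_mem := target_mem_canonical
  object_unique := hk.object_unique_of_mem_canonical hI

end Canonical

section Consistency

variable {des : DES Dom RSym FSym Shape ar far}

theorem consistent.keyCovered (hc : consistent des) : keyCovered des := by
  intro σ₁ σ₂ ⟨hσ₁, hσ₂, hf, hp, tc, htc, htcp, _, hm⟩ I hI ν₁ ν₂ hν₁ hν₂ hargs
  obtain ⟨J, hJ, -, -, hS⟩ := hc I hI
  obtain ⟨htriple₁, hshape, -⟩ := hJ σ₁ hσ₁ ν₁ hν₁
  obtain ⟨htriple₂, -, -⟩ := hJ σ₂ hσ₂ ν₂ hν₂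
  rw [← des.Fint_eq_Fint_iff.2 ⟨hf, hargs⟩, ← hp] at htriple₂
  rw [← htcp] at htriple₁ htriple₂
  exact (hS _ tc htc).2.2 hm _ _ _ hshape htriple₁ htriple₂

theorem keyCovered.consistent [Countable Shape] (hk : keyCovered des) : consistent des := by
  intro I hI
  obtain ⟨b, hb⟩ := exists_isNullChoice des.D des.shex
  let K := canonical des I ∪ J1set des.shex b
  have hK : IsPartialModel des.D des.shex K := (hk.isPartialModel_canonical hI).union_J1set hb
    fun _ hF _ hx => not_occursIn_of_mem_canonical hI hF hx
  have canonical_subset : canonical des I ⊆ K ∪ J3set des.shex b K :=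
    Set.subset_union_left.trans Set.subset_union_left
  exact ⟨K ∪ J3set des.shex b K, fun σ hσ => (stdSat_canonical hσ).mono canonical_subset,
    hK.satSigma_union_J3set Set.subset_union_right⟩

end Consistency

theorem stmt9_general [Countable Shape] (des : DES Dom RSym FSym Shape ar far) :
    consistent des ↔ keyCovered des :=
  ⟨consistent.keyCovered, keyCovered.consistent⟩

theorem stmt9 [Countable Dom] [Finite RSym] [Finite FSym] [Finite Shape]
    (des : DES Dom RSym FSym Shape ar far)
    (hmatch : ∀ σ1 σ2, contentious des σ1 σ2 → objMatch σ1 σ2) :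
    consistent des ↔ keyCovered des :=
  stmt9_general des

end RdfDE
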